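/- Assume the region where V = β is nonempty, that a cut-off function η with constant C_η exists, and that β ≥ c_β ε^{-2} for some c_β > 0. For each grid vertex z ∈ εℤ^d (modulo ℤ^d) let λ_z be the periodic Q₁ hat function λ_z(x) = ∏_{i=1}^d max(0, 1 − |x_i − z_i|/ε) (periodized), so that Σ_z λ_z ≡ 1. Then there is a constant C depending only on d, C_η and c_β such that every periodic Lipschitz function u satisfies Σ_{z} |||λ_z u|||² ≤ C · 2^{d+1} (1 + (κ L^d)² L²) · |||u|||². (Lemma 3.2 of the paper, providing the stable-decomposition constant K₁.) -/

import Mathlib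

open MeasureTheory Real
open scoped BigOperators RealInnerProductSpace

noncomputable section

/-- A function on `ℝ^d` is periodic if it is `ℤ^d`-periodic. -/
def ZPeriodic {d : ℕ} (f : (Fin d → ℝ) → ℝ) : Prop :=
  ∀ (x : Fin d → ℝ) (k : Fin d → ℤ), f (x + fun i => (k i : ℝ)) = f x

/-- The unit cell `[0,1)^d`. -/
def unitCell (d : ℕ) : Set (Fin d → ℝ) := Set.univ.pi fun _ => Set.Ico (0 : ℝ) 1

/-- Squared Euclidean norm `|∇f(x)|²` of the (a.e. defined) gradient of `f`. -/
def gradSq {d : ℕ} (f : (Fin d → ℝ) → ℝ) (x : Fin d → ℝ) : ℝ :=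
  ∑ i, (fderiv ℝ f x (Pi.single i 1)) ^ 2

/-- `‖v‖²`, the squared `L²` norm over the unit cell. -/
def l2sq {d : ℕ} (v : (Fin d → ℝ) → ℝ) : ℝ := ∫ x in unitCell d, (v x) ^ 2

/-- `‖∇v‖²_{L²([0,1)^d)}`. -/
def gradL2sq {d : ℕ} (v : (Fin d → ℝ) → ℝ) : ℝ := ∫ x in unitCell d, gradSq v x

/-- `|||v|||²`, the squared energy norm over the unit cell. -/
def energySq {d : ℕ} (V v : (Fin d → ℝ) → ℝ) : ℝ :=
  ∫ x in unitCell d, (gradSq v x + V x * (v x) ^ 2)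

/-- The open grid cell of side `ε` with lower-left corner `ε q`. -/
def gridCell {d : ℕ} (ε : ℝ) (q : Fin d → ℤ) : Set (Fin d → ℝ) :=
  {x | ∀ i, (q i : ℝ) * ε < x i ∧ x i < ((q i : ℝ) + 1) * ε}

/-- `V` is a periodic two-valued potential, constant on each (open) grid cell. -/
def IsGridPotential {d : ℕ} (ε α β : ℝ) (V : (Fin d → ℝ) → ℝ) : Prop :=
  ZPeriodic V ∧ (∀ x, V x = α ∨ V x = β) ∧
    ∀ q : Fin d → ℤ, (∀ x ∈ gridCell ε q, V x = α) ∨ (∀ x ∈ gridCell ε q, V x = β)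

/-- The axis-aligned closed cube of side `ε m` which is the union of the grid cells
`q + r`, `r ∈ {0, …, m-1}^d`. -/
def gridCube {d : ℕ} (ε : ℝ) (q : Fin d → ℤ) (m : ℕ) : Set (Fin d → ℝ) :=
  {x | ∀ i, (q i : ℝ) * ε ≤ x i ∧ x i ≤ ((q i : ℝ) + (m : ℝ)) * ε}

/-- An α-cube: a closed cube, union of grid cells, contained in `closure {V = α}`. -/
def IsAlphaCube {d : ℕ} (ε α : ℝ) (V : (Fin d → ℝ) → ℝ) (q : Fin d → ℤ) (m : ℕ) : Prop :=
  1 ≤ m ∧ gridCube ε q m ⊆ closure {x | V x = α}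

/-- A maximal α-cube: an α-cube maximal under inclusion among α-cubes. -/
def IsMaxAlphaCube {d : ℕ} (ε α : ℝ) (V : (Fin d → ℝ) → ℝ) (q : Fin d → ℤ) (m : ℕ) : Prop :=
  IsAlphaCube ε α V q m ∧ ∀ q' m', IsAlphaCube ε α V q' m' →
    gridCube ε q m ⊆ gridCube ε q' m' → gridCube ε q m = gridCube ε q' m'

/-- `ε L` is the largest side length of a maximal α-cube (with `L = 1` if no α-cube exists):
the maximal width of a potential valley. -/
def IsValleyWidth {d : ℕ} (ε α : ℝ) (V : (Fin d → ℝ) → ℝ) (L : ℕ) : Prop :=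
  IsGreatest {m | ∃ q, IsMaxAlphaCube ε α V q m} L ∨
    ((∀ q m, ¬ IsAlphaCube ε α V q m) ∧ L = 1)

/-- `κ` is the maximal number of maximal α-cubes containing a common α-grid cell. -/
def IsOverlapNumber {d : ℕ} (ε α : ℝ) (V : (Fin d → ℝ) → ℝ) (κ : ℕ) : Prop :=
  IsGreatest {n | ∃ q : Fin d → ℤ, (∀ x ∈ gridCell ε q, V x = α) ∧
    n = Nat.card {p : (Fin d → ℤ) × ℕ //
      IsMaxAlphaCube ε α V p.1 p.2 ∧ gridCell ε q ⊆ gridCube ε p.1 p.2}} κ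

/-- A cut-off function `η` with constant `Cη`: periodic, `C¹`, `[0,1]`-valued, equal to `1`
on every α-cell, vanishing on the closed concentric subcube of side `ε/2` of every β-cell,
with `‖∇η‖_∞ ≤ Cη / ε`. -/
structure IsCutoff {d : ℕ} (ε Cη α β : ℝ) (V η : (Fin d → ℝ) → ℝ) : Prop where
  periodic : ZPeriodic η
  contDiff : ContDiff ℝ 1 η
  mem_Icc : ∀ x, η x ∈ Set.Icc (0 : ℝ) 1
  eq_one : ∀ q : Fin d → ℤ, (∀ x ∈ gridCell ε q, V x = α) → ∀ x ∈ gridCell ε q, η x = 1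
  eq_zero : ∀ q : Fin d → ℤ, (∀ x ∈ gridCell ε q, V x = β) → ∀ x : Fin d → ℝ,
    (∀ i, ((q i : ℝ) + 1/4) * ε ≤ x i ∧ x i ≤ ((q i : ℝ) + 3/4) * ε) → η x = 0
  grad_le : ∀ x, ‖fderiv ℝ η x‖ ≤ Cη / ε


/-- Distance from `t` to the nearest integer. -/
def distZ (t : ℝ) : ℝ := |Int.fract (t + 1/2) - 1/2|

/-- The periodized `Q₁` hat function centered at `z`:
`λ_z(x) = ∏ᵢ max(0, 1 - |xᵢ - zᵢ|/ε)` interpreted `ℤ^d`-periodically. -/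
def perHat {d : ℕ} (ε : ℝ) (z x : Fin d → ℝ) : ℝ :=
  ∏ i, max 0 (1 - distZ (x i - z i) / ε)


open scoped Pointwise in
lemma aux_translate {d : ℕ} (f : (Fin d → ℝ) → ℝ) (hf : ZPeriodic f) (v : Fin d → ℝ) :
    ∫ x in unitCell d, f (x + v) = ∫ x in unitCell d, f x := by
  have h1 := ZSpan.isAddFundamentalDomain' (Pi.basisFun ℝ (Fin d)) (volume : Measure (Fin d → ℝ))
  rw [ZSpan.fundamentalDomain_pi_basisFun] at h1
  have h2 := h1.vadd_of_comm v
  have hinv : ∀ (g : (Submodule.span ℤ (Set.range (Pi.basisFun ℝ (Fin d)))).toAddSubgroup) (x : Fin d → ℝ),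
      f (g +ᵥ x) = f x := by
    rintro ⟨g, hg⟩ x
    rw [Submodule.mem_toAddSubgroup, Module.Basis.mem_span_iff_repr_mem] at hg
    choose k hk using hg
    have : g = fun i => (k i : ℝ) := by
      funext i
      have := hk i
      simp at this
      exact this.symm
    change f (g + x) = f x
    rw [add_comm, this, hf]
  haveI : Countable (Submodule.span ℤ (Set.range (Pi.basisFun ℝ (Fin d)))).toAddSubgroup :=
    inferInstanceAs (Countable (Submodule.span ℤ (Set.range (Pi.basisFun ℝ (Fin d)))))
  have h3 := h1.setIntegral_eq h2 hinv
  change ∫ x in unitCell d, f x = ∫ x in (v +ᵥ unitCell d), f x at h3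
  rw [h3]
  have := (measurePreserving_vadd v (volume : Measure (Fin d → ℝ))).setIntegral_image_emb
    (measurableEmbedding_const_vadd v) f (unitCell d)
  change ∫ y in (v +ᵥ unitCell d), f y = _ at this
  rw [this]
  simp [add_comm]

lemma unitCell_subset (d : ℕ) : unitCell d ⊆ Set.Icc (0 : Fin d → ℝ) 1 := by
  intro x hx
  refine ⟨fun i => (hx i trivial).1, fun i => (hx i trivial).2.le⟩

lemma unitCell_meas (d : ℕ) : MeasurableSet (unitCell d) :=
  MeasurableSet.univ_pi fun _ => measurableSet_Ico

lemma unitCell_fin (d : ℕ) : volume (unitCell d) < ⊤ :=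
  (measure_mono (unitCell_subset d)).trans_lt isCompact_Icc.measure_lt_top

lemma cont_int {d : ℕ} {f : (Fin d → ℝ) → ℝ} (hf : Continuous f) :
    IntegrableOn f (unitCell d) :=
  hf.integrableOn_Icc.mono_set (unitCell_subset d)

/-- The discrete-difference inequality. -/
lemma diff_le {d : ℕ} (u : (Fin d → ℝ) → ℝ) (hu : ZPeriodic u) {K : NNReal}
    (hK : LipschitzWith K u) (v : Fin d → ℝ) :
    ∫ x in unitCell d, (u (x + v) - u x) ^ 2 ≤
      ∫ x in unitCell d, (fderiv ℝ u x v) ^ 2 := by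
  have hc := hK.continuous
  have key : ∀ N : ℕ, 0 < N → ∫ x in unitCell d, (u (x + v) - u x) ^ 2 ≤
      ∫ x in unitCell d, ((N : ℝ) * (u (x + (N : ℝ)⁻¹ • v) - u x)) ^ 2 := by
    intro N hN
    have hN' : (N : ℝ) ≠ 0 := by positivity
    set w := (N : ℝ)⁻¹ • v with hw
    set D : (Fin d → ℝ) → ℝ := fun x => (u (x + w) - u x) ^ 2 with hD
    have hDc : Continuous D := by simp only [hD]; fun_prop
    have hDp : ZPeriodic D := by
      intro x k
      simp only [hD]
      rw [hu x k, add_right_comm, hu]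
    have pt : ∀ x, (u (x + v) - u x) ^ 2 ≤
        N * ∑ k ∈ Finset.range N, D (x + (k : ℝ) • w) := by
      intro x
      have tel : u (x + v) - u x =
          ∑ k ∈ Finset.range N, (u (x + (k : ℝ) • w + w) - u (x + (k : ℝ) • w)) := by
        have := Finset.sum_range_sub (fun k : ℕ => u (x + (k : ℝ) • w)) N
        have e : (N : ℝ) • w = v := by rw [hw, smul_smul, mul_inv_cancel₀ hN', one_smul]
        simp only [e, Nat.cast_zero, zero_smul, add_zero] at this
        rw [← this]
        refine Finset.sum_congr rfl fun k _ => ?_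
        rw [Nat.cast_succ, add_smul, one_smul, add_assoc]
      rw [tel]
      have := sq_sum_le_card_mul_sum_sq (s := Finset.range N)
        (f := fun k : ℕ => (u (x + (k : ℝ) • w + w) - u (x + (k : ℝ) • w)))
      simpa [hD] using this
    have hi : ∀ k : ℕ, IntegrableOn (fun x => D (x + (k : ℝ) • w)) (unitCell d) := fun k =>
      cont_int (by fun_prop)
    calc ∫ x in unitCell d, (u (x + v) - u x) ^ 2
        ≤ ∫ x in unitCell d, N * ∑ k ∈ Finset.range N, D (x + (k : ℝ) • w) := by
          refine integral_mono (cont_int (by fun_prop)) (cont_int (by fun_prop)) pt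
      _ = N * ∑ k ∈ Finset.range N, ∫ x in unitCell d, D (x + (k : ℝ) • w) := by
          rw [integral_const_mul, integral_finsetSum]
          exact fun k _ => hi k
      _ = N * (N * ∫ x in unitCell d, D x) := by
          congr 1
          rw [Finset.sum_congr rfl fun k _ => aux_translate D hDp _]
          simp
      _ = _ := by
          rw [← mul_assoc, ← integral_const_mul]
          simp only [hD]
          congr 1
          funext x
          ring
  have lim : Filter.Tendsto (fun N : ℕ => ∫ x in unitCell d,
      ((N : ℝ) * (u (x + (N : ℝ)⁻¹ • v) - u x)) ^ 2) Filter.atTop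
      (nhds (∫ x in unitCell d, (fderiv ℝ u x v) ^ 2)) := by
    refine tendsto_integral_of_dominated_convergence (fun _ => ((K : ℝ) * ‖v‖) ^ 2) ?_ ?_ ?_ ?_
    · intro N
      exact (by fun_prop : Continuous fun x =>
        ((N : ℝ) * (u (x + (N : ℝ)⁻¹ • v) - u x)) ^ 2).aestronglyMeasurable
    · exact cont_int continuous_const
    · intro N
      refine Filter.Eventually.of_forall fun x => ?_
      rw [Real.norm_eq_abs, abs_of_nonneg (sq_nonneg _)]
      refine sq_le_sq' ?_ ?_ <;> refine ((abs_le (b := (K : ℝ) * ‖v‖)).1 ?_).elim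
        (fun h1 h2 => by assumption)
      all_goals
        rw [abs_mul]
        have := hK.dist_le_mul (x + (N : ℝ)⁻¹ • v) x
        rw [Real.dist_eq, dist_eq_norm, add_sub_cancel_left, norm_smul] at this
        rcases Nat.eq_zero_or_pos N with h | h
        · subst h; simp; positivity
        · have hN' : (0 : ℝ) < N := by positivity
          calc |(N : ℝ)| * |u (x + (N : ℝ)⁻¹ • v) - u x|
              ≤ |(N : ℝ)| * (K * (‖(N : ℝ)⁻¹‖ * ‖v‖)) := by gcongr
            _ = K * ‖v‖ := by
              rw [Real.norm_eq_abs, abs_inv, abs_of_pos hN']; field_simp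
    · refine ae_restrict_of_ae ?_
      filter_upwards [hK.ae_differentiableAt] with x hx
      have h1 := (hx.hasFDerivAt.lim_real v).comp (tendsto_natCast_atTop_atTop (R := ℝ))
      simpa [Function.comp_def] using h1.pow 2
  refine ge_of_tendsto lim ?_
  filter_upwards [Filter.eventually_gt_atTop 0] with N hN using key N hN

lemma distZ_eq (t : ℝ) : distZ t = |t - round t| := by
  unfold distZ
  rw [round_eq, Int.fract]
  congr 1
  ring

lemma distZ_lip (s t : ℝ) : |distZ s - distZ t| ≤ |s - t| := by
  have h : ∀ s t : ℝ, distZ s ≤ |s - t| + distZ t := by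
    intro s t
    rw [distZ_eq, distZ_eq]
    calc |s - round s| ≤ |s - round t| := round_le s _
      _ = |(s - t) + (t - round t)| := by ring_nf
      _ ≤ _ := abs_add_le _ _
  have h1 := h s t
  have h2 := h t s
  rw [abs_sub_comm t s] at h2
  rw [abs_le]
  constructor <;> linarith

lemma prod_diff {ι : Type*} (s : Finset ι) (a b : ι → ℝ) (ha : ∀ i, a i ∈ Set.Icc (0 : ℝ) 1)
    (hb : ∀ i, b i ∈ Set.Icc (0 : ℝ) 1) :
    |∏ i ∈ s, a i - ∏ i ∈ s, b i| ≤ ∑ i ∈ s, |a i - b i| := by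
  classical
  induction s using Finset.induction_on with
  | empty => simp
  | insert j s hj ih =>
    rw [Finset.prod_insert hj, Finset.prod_insert hj, Finset.sum_insert hj]
    have h1 : |∏ i ∈ s, a i| ≤ 1 := by
      rw [abs_of_nonneg (Finset.prod_nonneg fun i _ => (ha i).1)]
      exact Finset.prod_le_one (fun i _ => (ha i).1) fun i _ => (ha i).2
    have h2 : |b j| ≤ 1 := by rw [abs_of_nonneg (hb j).1]; exact (hb j).2
    calc |a j * ∏ i ∈ s, a i - b j * ∏ i ∈ s, b i|
        = |(a j - b j) * ∏ i ∈ s, a i + b j * (∏ i ∈ s, a i - ∏ i ∈ s, b i)| := by ring_nf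
      _ ≤ |a j - b j| * |∏ i ∈ s, a i| + |b j| * |∏ i ∈ s, a i - ∏ i ∈ s, b i| := by
        rw [← abs_mul, ← abs_mul]; exact abs_add_le _ _
      _ ≤ |a j - b j| * 1 + 1 * |∏ i ∈ s, a i - ∏ i ∈ s, b i| := by gcongr
      _ ≤ _ := by linarith

lemma hat_mem {ε : ℝ} (hε : 0 < ε) (t : ℝ) :
    max 0 (1 - distZ t / ε) ∈ Set.Icc (0 : ℝ) 1 := by
  refine ⟨le_max_left _ _, max_le zero_le_one ?_⟩
  have : 0 ≤ distZ t / ε := div_nonneg (abs_nonneg _) hε.le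
  linarith

lemma perHat_mem {d : ℕ} {ε : ℝ} (hε : 0 < ε) (z x : Fin d → ℝ) :
    perHat ε z x ∈ Set.Icc (0 : ℝ) 1 :=
  ⟨Finset.prod_nonneg fun _ _ => (hat_mem hε _).1,
    Finset.prod_le_one (fun _ _ => (hat_mem hε _).1) fun _ _ => (hat_mem hε _).2⟩

lemma perHat_lip {d : ℕ} {ε : ℝ} (hε : 0 < ε) (z : Fin d → ℝ) :
    LipschitzWith (Real.toNNReal (d / ε)) (perHat ε z) := by
  refine LipschitzWith.of_dist_le_mul fun x y => ?_
  rw [Real.coe_toNNReal _ (by positivity), Real.dist_eq]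
  refine (prod_diff Finset.univ _ _ (fun i => hat_mem hε _) (fun i => hat_mem hε _)).trans ?_
  calc _ ≤ ∑ i : Fin d, dist x y / ε := by
        refine Finset.sum_le_sum fun i _ => ?_
        rw [max_comm 0, max_comm 0]
        refine (abs_max_sub_max_le_abs _ _ _).trans ?_
        have h1 := distZ_lip (x i - z i) (y i - z i)
        rw [sub_sub_sub_cancel_right] at h1
        have h2 := dist_le_pi_dist x y i
        rw [Real.dist_eq] at h2
        have e : 1 - distZ (x i - z i) / ε - (1 - distZ (y i - z i) / ε) =
          -((distZ (x i - z i) - distZ (y i - z i)) / ε) := by ring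
        rw [e, abs_neg, abs_div, abs_of_pos hε]
        gcongr
        exact h1.trans h2
    _ = _ := by
      rw [Finset.sum_const, Finset.card_univ, Fintype.card_fin, nsmul_eq_mul]
      ring

lemma hat_count1 {ε : ℝ} {n : ℕ} (hε : 0 < ε) (hn : 0 < n) (he : ε * n = 1) (t : ℝ) :
    (Finset.univ.filter fun k : Fin n => distZ (t - ε * ((k : ℕ) : ℝ)) < ε).card ≤ 3 := by
  have hn' : (0 : ℝ) < n := by positivity
  set A := Finset.univ.filter fun k : Fin n => distZ (t - ε * ((k : ℕ) : ℝ)) < ε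
  have h1 : A.card = (A.image fun k : Fin n => ((k : ℕ) : ℤ)).card := by
    rw [Finset.card_image_of_injective]
    intro a b h
    simpa [Fin.ext_iff] using h
  rw [h1]
  have h2 : (A.image fun k : Fin n => ((k : ℕ) : ℤ)) ⊆
      (Finset.Icc (⌊n * t⌋ - 1) (⌊n * t⌋ + 1)).image fun j : ℤ => j % n := by
    intro j hj
    obtain ⟨k, hk, rfl⟩ := Finset.mem_image.1 hj
    have hk := (Finset.mem_filter.1 hk).2
    rw [distZ_eq] at hk
    set m := round (t - ε * ((k : ℕ) : ℝ))
    refine Finset.mem_image.2 ⟨(k : ℕ) + n * m, ?_, ?_⟩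
    · have h3 : |n * t - ((k : ℕ) + n * m)| < 1 := by
        have : (n : ℝ) * t - ((k : ℕ) + n * m) = n * (t - ε * ((k : ℕ) : ℝ) - m) := by
          have : (n : ℝ) * (ε * ((k : ℕ) : ℝ)) = (k : ℕ) := by
            rw [← mul_assoc, mul_comm (n : ℝ), he, one_mul]
          rw [mul_sub, mul_sub, this]; ring
        rw [this, abs_mul, abs_of_pos hn', ← he, mul_comm ε (n : ℝ)]
        exact mul_lt_mul_of_pos_left hk hn'
      rw [abs_lt] at h3
      have f1 := Int.floor_le ((n : ℝ) * t)
      have f2 := Int.lt_floor_add_one ((n : ℝ) * t)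
      rw [Finset.mem_Icc]
      constructor
      · have : (⌊(n : ℝ) * t⌋ : ℝ) - 1 < (((k : ℕ) + n * m : ℤ) : ℝ) := by
          push_cast; linarith
        have : ⌊(n : ℝ) * t⌋ - 1 < ((k : ℕ) + n * m : ℤ) := by exact_mod_cast this
        exact this.le
      · have : (((k : ℕ) + n * m : ℤ) : ℝ) < (⌊(n : ℝ) * t⌋ : ℝ) + 2 := by
          push_cast; linarith
        have : ((k : ℕ) + n * m : ℤ) < ⌊(n : ℝ) * t⌋ + 2 := by exact_mod_cast this
        lia
    · rw [Int.add_mul_emod_self_left]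
      exact Int.emod_eq_of_lt (by positivity) (by exact_mod_cast k.2)
  refine (Finset.card_le_card h2).trans (Finset.card_image_le.trans ?_)
  simp
  lia

lemma hat_count {d : ℕ} {ε : ℝ} {n : ℕ} (hε : 0 < ε) (hn : 0 < n) (he : ε * n = 1)
    (x : Fin d → ℝ) :
    (Finset.univ.filter fun z : Fin d → Fin n =>
      perHat ε (fun i => ε * ((z i : ℕ) : ℝ)) x ≠ 0).card ≤ 3 ^ d := by
  have : (Finset.univ.filter fun z : Fin d → Fin n =>
      perHat ε (fun i => ε * ((z i : ℕ) : ℝ)) x ≠ 0) ⊆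
      Fintype.piFinset fun i => Finset.univ.filter fun k : Fin n =>
        distZ (x i - ε * ((k : ℕ) : ℝ)) < ε := by
    intro z hz
    have hz := (Finset.mem_filter.1 hz).2
    rw [Fintype.mem_piFinset]
    intro i
    refine Finset.mem_filter.2 ⟨Finset.mem_univ _, ?_⟩
    by_contra hcon
    push Not at hcon
    refine hz (Finset.prod_eq_zero (Finset.mem_univ i) ?_)
    rw [max_eq_left]
    have := (one_le_div hε).2 hcon
    linarith
  refine (Finset.card_le_card this).trans ?_
  rw [Fintype.card_piFinset]
  calc _ ≤ ∏ i : Fin d, 3 := Finset.prod_le_prod' fun i _ => hat_count1 hε hn he _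
    _ = 3 ^ d := by simp

/-- Pointwise bound for the localized energy density. -/
lemma hat_pt {d : ℕ} {ε : ℝ} (hε : 0 < ε) (z x : Fin d → ℝ) (V u : (Fin d → ℝ) → ℝ)
    (hV : 0 ≤ V x) (hu : DifferentiableAt ℝ u x) (hl : DifferentiableAt ℝ (perHat ε z) x) :
    gradSq (fun x => perHat ε z x * u x) x + V x * (perHat ε z x * u x) ^ 2 ≤
      Set.indicator {x | perHat ε z x ≠ 0} (fun x =>
        2 * gradSq u x + 2 * d ^ 3 / ε ^ 2 * u x ^ 2 + V x * u x ^ 2) x := by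
  have hm := perHat_mem hε z x
  have hf : fderiv ℝ (fun x => perHat ε z x * u x) x =
      perHat ε z x • fderiv ℝ u x + u x • fderiv ℝ (perHat ε z) x := fderiv_fun_mul hl hu
  by_cases h : perHat ε z x = 0
  · rw [Set.indicator_of_notMem (by simpa using h)]
    have hmin : IsLocalMin (perHat ε z) x :=
      Filter.Eventually.of_forall fun y => by rw [h]; exact (perHat_mem hε z y).1
    have h0 := hmin.fderiv_eq_zero
    simp [gradSq, hf, h, h0]
  · rw [Set.indicator_of_mem (by simpa using h)]
    have h1 : gradSq (fun x => perHat ε z x * u x) x ≤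
        2 * gradSq u x + 2 * d ^ 3 / ε ^ 2 * u x ^ 2 := by
      unfold gradSq
      calc _ ≤ ∑ i : Fin d, (2 * (fderiv ℝ u x (Pi.single i 1)) ^ 2 +
            2 * (d / ε) ^ 2 * u x ^ 2) := by
            refine Finset.sum_le_sum fun i _ => ?_
            rw [hf]
            simp only [add_apply, smul_apply, smul_eq_mul]
            set a := fderiv ℝ u x (Pi.single i 1)
            set b := fderiv ℝ (perHat ε z) x (Pi.single i 1) with hb
            set l := perHat ε z x
            have hbb : |b| ≤ d / ε := by
              have h2 := norm_fderiv_le_of_lipschitz ℝ (perHat_lip hε z) (x₀ := x)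
              rw [Real.coe_toNNReal _ (by positivity)] at h2
              have h3 := (fderiv ℝ (perHat ε z) x).le_opNorm (Pi.single i 1)
              rw [Pi.norm_single, norm_one, mul_one, Real.norm_eq_abs] at h3
              exact h3.trans h2
            have hb2 : b ^ 2 ≤ (d / ε) ^ 2 := by
              rw [← sq_abs b]; gcongr
            have hl2 : l ^ 2 ≤ 1 := pow_le_one₀ hm.1 hm.2
            calc (l * a + u x * b) ^ 2 ≤ 2 * (l ^ 2 * a ^ 2) + 2 * (b ^ 2 * u x ^ 2) := by
                  nlinarith [sq_nonneg (l * a - u x * b)]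
              _ ≤ 2 * (1 * a ^ 2) + 2 * ((d / ε) ^ 2 * u x ^ 2) := by gcongr
              _ = _ := by ring
        _ = _ := by
          rw [Finset.sum_add_distrib, ← Finset.mul_sum, Finset.sum_const, Finset.card_univ,
            Fintype.card_fin, nsmul_eq_mul]
          ring
    have h2 : V x * (perHat ε z x * u x) ^ 2 ≤ V x * u x ^ 2 := by
      refine mul_le_mul_of_nonneg_left ?_ hV
      rw [mul_pow]
      exact mul_le_of_le_one_left (sq_nonneg _) (pow_le_one₀ hm.1 hm.2)
    linarith

lemma center_mem {d : ℕ} {ε : ℝ} (hε : 0 < ε) (q : Fin d → ℤ) :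
    (fun i => ((q i : ℝ) + 1 / 2) * ε) ∈ gridCell ε q := by
  intro i
  constructor <;> nlinarith

lemma gridCell_eq {d : ℕ} (ε : ℝ) (q : Fin d → ℤ) :
    gridCell ε q = Set.univ.pi fun i => Set.Ioo ((q i : ℝ) * ε) (((q i : ℝ) + 1) * ε) := by
  ext x
  simp [gridCell]

lemma gridCell_open {d : ℕ} (ε : ℝ) (q : Fin d → ℤ) : IsOpen (gridCell ε q) := by
  rw [gridCell_eq]
  exact isOpen_set_pi Set.finite_univ fun i _ => isOpen_Ioo

lemma gridCell_closure {d : ℕ} {ε : ℝ} (hε : 0 < ε) (q : Fin d → ℤ) :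
    closure (gridCell ε q) =
      Set.univ.pi fun i => Set.Icc ((q i : ℝ) * ε) (((q i : ℝ) + 1) * ε) := by
  rw [gridCell_eq, closure_pi_set]
  congr 1
  funext i
  rw [closure_Ioo]
  nlinarith

lemma beta_not_sub {d : ℕ} {ε α β : ℝ} {V : (Fin d → ℝ) → ℝ} (hε : 0 < ε) (hab : α ≠ β)
    (q : Fin d → ℤ) (hq : ∀ x ∈ gridCell ε q, V x = β) :
    ¬ gridCell ε q ⊆ closure {x | V x = α} := by
  intro h
  have h1 := h (center_mem hε q)
  obtain ⟨y, hy, hy'⟩ := mem_closure_iff.1 h1 _ (gridCell_open ε q) (center_mem hε q)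
  exact hab (hy'.symm.trans (hq y hy))

lemma cell_sub_cube {d : ℕ} {ε : ℝ} (hε : 0 < ε) (q p : Fin d → ℤ) (m : ℕ)
    (h : ∀ i, p i ≤ q i ∧ q i + 1 ≤ p i + m) : gridCell ε q ⊆ gridCube ε p m := by
  intro x hx i
  have h1 : (p i : ℝ) ≤ q i := by exact_mod_cast (h i).1
  have h2 : (q i : ℝ) + 1 ≤ p i + m := by exact_mod_cast (h i).2
  exact ⟨(mul_le_mul_of_nonneg_right h1 hε.le).trans (hx i).1.le,
    (hx i).2.le.trans (mul_le_mul_of_nonneg_right h2 hε.le)⟩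

lemma cell_sub_cube' {d : ℕ} {ε : ℝ} (hε : 0 < ε) (q p : Fin d → ℤ) (m : ℕ)
    (h : gridCell ε q ⊆ gridCube ε p m) : ∀ i, p i ≤ q i ∧ q i + 1 ≤ p i + m := by
  intro i
  have h1 := h (center_mem hε q) i
  have h2 : (p i : ℝ) ≤ q i + 1 / 2 := le_of_mul_le_mul_right h1.1 hε
  have h3 : (q i : ℝ) + 1 / 2 ≤ p i + m := le_of_mul_le_mul_right h1.2 hε
  constructor
  · have : (p i : ℝ) < ((q i + 1 : ℤ) : ℝ) := by push_cast; linarith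
    have : p i < q i + 1 := by exact_mod_cast this
    lia
  · have : (q i : ℝ) < ((p i + m : ℤ) : ℝ) := by push_cast; linarith
    have : q i < p i + m := by exact_mod_cast this
    lia

lemma cube_sub {d : ℕ} {ε : ℝ} (hε : 0 < ε) (q p : Fin d → ℤ) (k m : ℕ)
    (h : gridCube ε q k ⊆ gridCube ε p m) : ∀ i, p i ≤ q i ∧ q i + k ≤ p i + m := by
  intro i
  have hk : (0 : ℝ) ≤ k := by positivity
  have a1 : (fun i => (q i : ℝ) * ε) ∈ gridCube ε q k := fun j =>
    ⟨le_rfl, mul_le_mul_of_nonneg_right (by linarith) hε.le⟩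
  have a2 : (fun i => ((q i : ℝ) + k) * ε) ∈ gridCube ε q k := fun j =>
    ⟨mul_le_mul_of_nonneg_right (by linarith) hε.le, le_rfl⟩
  have h2 : (p i : ℝ) ≤ q i := le_of_mul_le_mul_right (h a1 i).1 hε
  have h3 : (q i : ℝ) + k ≤ p i + m := le_of_mul_le_mul_right (h a2 i).2 hε
  exact ⟨by exact_mod_cast h2, by exact_mod_cast h3⟩

lemma alpha_bound {d : ℕ} {ε α β : ℝ} {V : (Fin d → ℝ) → ℝ} {n : ℕ} (hε : 0 < ε) (hn : 0 < n)
    (he : ε * n = 1) (hab : α ≠ β) (hV : ZPeriodic V) (q0 : Fin d → ℤ)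
    (hq0 : ∀ x ∈ gridCell ε q0, V x = β) (q : Fin d → ℤ) (m : ℕ) (h : IsAlphaCube ε α V q m) :
    m ≤ n := by
  by_contra hcon
  push Not at hcon
  have hn' : (0 : ℤ) < n := by exact_mod_cast hn
  let q1 : Fin d → ℤ := fun i => q i + (q0 i - q i) % n
  let k : Fin d → ℤ := fun i => (q0 i - q i) / n
  have hk : ∀ i, q0 i = q1 i + n * k i := by
    intro i
    have := Int.emod_add_mul_ediv (q0 i - q i) n
    simp only [q1, k]
    lia
  have hq1 : ∀ x ∈ gridCell ε q1, V x = β := by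
    intro x hx
    rw [← hV x k]
    refine hq0 _ fun i => ?_
    have e : (q0 i : ℝ) * ε = q1 i * ε + k i := by
      have : (q0 i : ℝ) = q1 i + n * k i := by exact_mod_cast hk i
      rw [this]
      linear_combination (k i : ℝ) * he
    have := hx i
    simp only [Pi.add_apply]
    constructor
    · linarith
    · nlinarith
  refine beta_not_sub hε hab q1 hq1 ((cell_sub_cube hε q1 q m fun i => ?_).trans h.2)
  have h1 := Int.emod_nonneg (q0 i - q i) hn'.ne'
  have h2 := Int.emod_lt_of_pos (q0 i - q i) hn'
  simp only [q1]
  constructor <;> lia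

lemma exists_max {d : ℕ} (hd : 1 ≤ d) {ε α β : ℝ} {V : (Fin d → ℝ) → ℝ} {n : ℕ} (hε : 0 < ε)
    (hn : 0 < n)
    (he : ε * n = 1) (hab : α ≠ β) (hV : ZPeriodic V) (q0 : Fin d → ℤ)
    (hq0 : ∀ x ∈ gridCell ε q0, V x = β) (q : Fin d → ℤ) (m : ℕ) (h : IsAlphaCube ε α V q m) :
    ∃ q' m', IsMaxAlphaCube ε α V q' m' ∧ gridCube ε q m ⊆ gridCube ε q' m' ∧ m ≤ m' := by
  classical
  let P : ℕ → Prop := fun m' => ∃ q', IsAlphaCube ε α V q' m' ∧ gridCube ε q m ⊆ gridCube ε q' m'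
  have hb := alpha_bound hε hn he hab hV q0 hq0
  have hPm : P m := ⟨q, h, subset_rfl⟩
  have hs := Nat.findGreatest_spec (hb q m h) hPm
  set M := Nat.findGreatest P n with hM
  obtain ⟨q', hq', hsub⟩ := hs
  refine ⟨q', M, ⟨hq', ?_⟩, hsub, Nat.le_findGreatest (hb q m h) hPm⟩
  intro q'' m'' h'' hsub''
  have h1 : m'' ≤ M := Nat.le_findGreatest (hb _ _ h'') ⟨q'', h'', hsub.trans hsub''⟩
  have h2 := cube_sub hε _ _ _ _ hsub''
  have h3 := h2 ⟨0, hd⟩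
  have h4 : m'' = M := by lia
  subst h4
  have : q'' = q' := by
    funext i
    have := h2 i
    lia
  rw [this]

lemma cube_alpha {d : ℕ} {ε α : ℝ} {V : (Fin d → ℝ) → ℝ} (hε : 0 < ε) (q : Fin d → ℤ) (L : ℕ)
    (h : ∀ r : Fin d → Fin (L + 1), ∀ x ∈ gridCell ε (fun i => q i + ((r i : ℕ) : ℤ)), V x = α) :
    IsAlphaCube ε α V q (L + 1) := by
  refine ⟨by lia, fun y hy => ?_⟩
  have hr : ∀ i, ∃ r : Fin (L + 1), ((q i : ℝ) + ((r : ℕ) : ℝ)) * ε ≤ y i ∧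
      y i ≤ ((q i : ℝ) + ((r : ℕ) : ℝ) + 1) * ε := by
    intro i
    have h0 : 0 ≤ y i / ε - q i := by
      have := (le_div_iff₀ hε).2 (hy i).1
      linarith
    have h1 : y i / ε ≤ q i + (L + 1) := by
      have := (div_le_iff₀ hε).2 (hy i).2
      push_cast at this
      exact this
    have f1 := Nat.floor_le h0
    have f2 := Nat.lt_floor_add_one (y i / ε - q i)
    by_cases hL : ⌊y i / ε - q i⌋₊ ≤ L
    · refine ⟨⟨⌊y i / ε - q i⌋₊, by lia⟩, ?_, ?_⟩
      · rw [← le_div_iff₀ hε]; simp only; linarith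
      · rw [← div_le_iff₀ hε]; simp only; linarith
    · refine ⟨⟨L, by lia⟩, ?_, ?_⟩
      · push Not at hL
        have : (L : ℝ) < ⌊y i / ε - q i⌋₊ := by exact_mod_cast hL
        rw [← le_div_iff₀ hε]; simp only; linarith
      · rw [← div_le_iff₀ hε]; simp only; linarith
  choose r hr using hr
  have hsub : gridCell ε (fun i => q i + ((r i : ℕ) : ℤ)) ⊆ {x | V x = α} := fun x hx => h r x hx
  refine closure_mono hsub ?_
  rw [gridCell_closure hε]
  intro i _
  push_cast
  exact hr i

lemma mem_cell_floor {d : ℕ} {ε : ℝ} (hε : 0 < ε) (x : Fin d → ℝ)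
    (hx : ∀ i, ∀ k : ℤ, x i ≠ k * ε) : x ∈ gridCell ε (fun i => ⌊x i / ε⌋) := by
  intro i
  have f1 := Int.floor_le (x i / ε)
  have f2 := Int.lt_floor_add_one (x i / ε)
  rw [le_div_iff₀ hε] at f1
  rw [div_lt_iff₀ hε] at f2
  exact ⟨lt_of_le_of_ne f1 (hx i _).symm, f2⟩

lemma exists_beta {d : ℕ} (hd : 1 ≤ d) {ε α β : ℝ} {V : (Fin d → ℝ) → ℝ} {n L : ℕ} (hε : 0 < ε)
    (hn : 0 < n) (he : ε * n = 1) (hab : α ≠ β) (hV : IsGridPotential ε α β V) (q0 : Fin d → ℤ)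
    (hq0 : ∀ x ∈ gridCell ε q0, V x = β) (hL : IsValleyWidth ε α V L) (x : Fin d → ℝ)
    (hx : ∀ i, ∀ k : ℤ, x i ≠ k * ε) :
    ∃ r : Fin d → Fin (L + 1), V (x + fun i => ε * ((r i : ℕ) : ℝ)) = β := by
  by_contra hcon
  push Not at hcon
  have hm := mem_cell_floor hε x hx
  have hcube : IsAlphaCube ε α V (fun i => ⌊x i / ε⌋) (L + 1) := by
    refine cube_alpha hε _ L fun r => ?_
    rcases hV.2.2 (fun i => ⌊x i / ε⌋ + ((r i : ℕ) : ℤ)) with h | h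
    · exact h
    · refine absurd (h _ fun i => ?_) (hcon r)
      have := hm i
      simp only [Pi.add_apply]
      push_cast
      constructor <;> linarith
  obtain ⟨q', m', hmax, -, hle⟩ := exists_max hd hε hn he hab hV.1 q0 hq0 _ _ hcube
  rcases hL with h | h
  · have := h.2 ⟨q', hmax⟩
    lia
  · exact h.1 _ _ hcube

lemma kappa_pos {d : ℕ} (hd : 1 ≤ d) {ε α β : ℝ} {V : (Fin d → ℝ) → ℝ} {n κ : ℕ} (hε : 0 < ε)
    (hn : 0 < n) (he : ε * n = 1) (hab : α ≠ β) (hV : IsGridPotential ε α β V) (q0 : Fin d → ℤ)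
    (hq0 : ∀ x ∈ gridCell ε q0, V x = β) (hκ : IsOverlapNumber ε α V κ) : 1 ≤ κ := by
  obtain ⟨⟨q, hq, hk⟩, -⟩ := hκ
  have hb := alpha_bound hε hn he hab hV.1 q0 hq0
  have hc : IsAlphaCube ε α V q (0 + 1) := by
    refine cube_alpha hε _ 0 fun r => ?_
    have : (fun i => q i + ((r i : ℕ) : ℤ)) = q := by
      funext i
      have := (r i).2
      have : (r i : ℕ) = 0 := by lia
      simp [this]
    rw [this]
    exact hq
  obtain ⟨q', m', hmax, hsub, -⟩ := exists_max hd hε hn he hab hV.1 q0 hq0 _ _ hc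
  have hne : Nonempty {p : (Fin d → ℤ) × ℕ //
      IsMaxAlphaCube ε α V p.1 p.2 ∧ gridCell ε q ⊆ gridCube ε p.1 p.2} :=
    ⟨⟨(q', m'), hmax, (cell_sub_cube hε q q _ fun i => ⟨le_rfl, by simp⟩).trans hsub⟩⟩
  have hfin : Finite {p : (Fin d → ℤ) × ℕ //
      IsMaxAlphaCube ε α V p.1 p.2 ∧ gridCell ε q ⊆ gridCube ε p.1 p.2} := by
    refine Set.Finite.subset (((Set.finite_Icc (fun i => q i - n) q)).prod (Set.finite_Iic n)) ?_
    rintro ⟨p, m⟩ ⟨h1, h2⟩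
    have hm := hb _ _ h1.1
    have h3 := cell_sub_cube' hε _ _ _ h2
    refine ⟨⟨fun i => ?_, fun i => (h3 i).1⟩, hm⟩
    have := (h3 i).2
    simp only at hm this ⊢
    lia
  rw [hk]
  exact Nat.card_pos

lemma ae_offgrid {d : ℕ} (ε : ℝ) :
    ∀ᵐ x : Fin d → ℝ, ∀ i, ∀ k : ℤ, x i ≠ k * ε := by
  rw [ae_all_iff]
  intro i
  rw [ae_all_iff]
  intro k
  exact Measure.ae_eval_ne (μ := fun _ : Fin d => (volume : Measure ℝ)) i _

lemma V_aesm {d : ℕ} {ε α β : ℝ} {V : (Fin d → ℝ) → ℝ} (hε : 0 < ε)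
    (hV : IsGridPotential ε α β V) : AEStronglyMeasurable V volume := by
  let F : (Fin d → ℤ) → ℝ := fun q => V fun i => ((q i : ℝ) + 1 / 2) * ε
  have hm : Measurable fun x : Fin d → ℝ => F fun i => ⌊x i / ε⌋ := by
    refine (measurable_of_countable F).comp ?_
    fun_prop
  refine ⟨_, hm.stronglyMeasurable, ?_⟩
  filter_upwards [ae_offgrid ε] with x hx
  have hx' := mem_cell_floor hε x hx
  have hc := center_mem hε (fun i => ⌊x i / ε⌋)
  rcases hV.2.2 (fun i => ⌊x i / ε⌋) with h | h
  · rw [h x hx']; exact (h _ hc).symm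
  · rw [h x hx']; exact (h _ hc).symm

lemma gradSq_nonneg {d : ℕ} (u : (Fin d → ℝ) → ℝ) (x : Fin d → ℝ) : 0 ≤ gradSq u x :=
  Finset.sum_nonneg fun _ _ => sq_nonneg _

lemma gradSq_int {d : ℕ} (u : (Fin d → ℝ) → ℝ) {K : NNReal} (hK : LipschitzWith K u) :
    IntegrableOn (gradSq u) (unitCell d) := by
  have hm : Measurable (gradSq u) := by
    unfold gradSq
    refine Finset.measurable_sum _ fun i _ => ?_
    exact (measurable_fderiv_apply_const ℝ u (Pi.single i 1)).pow_const 2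
  refine Measure.integrableOn_of_bounded (M := ∑ i : Fin d, (K : ℝ) ^ 2) (unitCell_fin d).ne
    hm.aestronglyMeasurable ?_
  refine Filter.Eventually.of_forall fun x => ?_
  rw [Real.norm_eq_abs, abs_of_nonneg (gradSq_nonneg u x)]
  refine Finset.sum_le_sum fun i _ => ?_
  have h2 := norm_fderiv_le_of_lipschitz ℝ hK (x₀ := x)
  have h3 := (fderiv ℝ u x).le_opNorm (Pi.single i 1)
  rw [Pi.norm_single, norm_one, mul_one, Real.norm_eq_abs] at h3
  rw [← sq_abs]
  have := h3.trans h2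
  gcongr

lemma fderiv_sq_le {d : ℕ} (u : (Fin d → ℝ) → ℝ) (x v : Fin d → ℝ) {B : ℝ}
    (hv : ∀ i, (v i) ^ 2 ≤ B) :
    (fderiv ℝ u x v) ^ 2 ≤ d * B * gradSq u x := by
  have e : v = ∑ i, v i • (Pi.single i 1 : Fin d → ℝ) := by
    funext j
    simp [Finset.sum_apply, Pi.single_apply]
  have e2 : fderiv ℝ u x v = ∑ i, v i * fderiv ℝ u x (Pi.single i 1) := by
    conv_lhs => rw [e]
    simp only [map_sum, map_smul, smul_eq_mul]
  rw [e2]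
  refine (Finset.sum_mul_sq_le_sq_mul_sq _ _ _).trans ?_
  refine mul_le_mul_of_nonneg_right ?_ (gradSq_nonneg u x)
  calc _ ≤ ∑ i : Fin d, B := Finset.sum_le_sum fun i _ => hv i
    _ = d * B := by simp

lemma pot_int {d : ℕ} {ε α β : ℝ} {V : (Fin d → ℝ) → ℝ} (hε : 0 < ε)
    (hV : IsGridPotential ε α β V) {u : (Fin d → ℝ) → ℝ} (hu : Continuous u) (w : Fin d → ℝ) :
    IntegrableOn (fun x => V (x + w) * u (x + w) ^ 2) (unitCell d) := by
  have h1 : IntegrableOn (fun x => u (x + w) ^ 2) (unitCell d) := cont_int (by fun_prop)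
  have h2 : AEStronglyMeasurable (fun x => V (x + w)) volume :=
    (V_aesm hε hV).comp_quasiMeasurePreserving
      (measurePreserving_add_right volume w).quasiMeasurePreserving
  refine Integrable.bdd_mul (c := max |α| |β|) h1 h2.restrict ?_
  refine Filter.Eventually.of_forall fun x => ?_
  rcases hV.2.1 (x + w) with h | h <;> rw [h, Real.norm_eq_abs]
  · exact le_max_left _ _
  · exact le_max_right _ _

lemma poincare {d : ℕ} (hd : 1 ≤ d) {ε α β c_β : ℝ} {V : (Fin d → ℝ) → ℝ} {n L : ℕ} (hε : 0 < ε)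
    (hn : 0 < n) (he : ε * n = 1) (hab : α ≠ β) (hα : 0 ≤ α) (hαβ : α ≤ β) (hc : 0 < c_β)
    (hβ : c_β / ε ^ 2 ≤ β) (hV : IsGridPotential ε α β V) (q0 : Fin d → ℤ)
    (hq0 : ∀ x ∈ gridCell ε q0, V x = β) (hL : IsValleyWidth ε α V L)
    (u : (Fin d → ℝ) → ℝ) (hu : ZPeriodic u) {K : NNReal} (hK : LipschitzWith K u) :
    ∫ x in unitCell d, u x ^ 2 ≤ ((L : ℝ) + 1) ^ d *
      (2 * ε ^ 2 / c_β * (∫ x in unitCell d, V x * u x ^ 2) +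
        2 * (d * (ε * L) ^ 2) * ∫ x in unitCell d, gradSq u x) := by
  have hcont := hK.continuous
  have hV0 : ∀ x, 0 ≤ V x := fun x => by
    rcases hV.2.1 x with h | h <;> rw [h]
    · exact hα
    · exact hα.trans hαβ
  let w : (Fin d → Fin (L + 1)) → (Fin d → ℝ) := fun r i => ε * ((r i : ℕ) : ℝ)
  let T : (Fin d → Fin (L + 1)) → (Fin d → ℝ) → ℝ := fun r x =>
    2 * ε ^ 2 / c_β * (V (x + w r) * u (x + w r) ^ 2) + 2 * (u (x + w r) - u x) ^ 2
  have hT0 : ∀ r x, 0 ≤ T r x := fun r x => by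
    have := hV0 (x + w r)
    simp only [T]
    positivity
  have i1 : ∀ r, IntegrableOn (fun x => 2 * ε ^ 2 / c_β * (V (x + w r) * u (x + w r) ^ 2))
      (unitCell d) := fun r => (pot_int hε hV hcont (w r)).const_mul _
  have i2 : ∀ r, IntegrableOn (fun x => 2 * (u (x + w r) - u x) ^ 2) (unitCell d) := fun r =>
    cont_int (by fun_prop)
  have hTi : ∀ r, IntegrableOn (T r) (unitCell d) := fun r => (i1 r).add (i2 r)
  have hpt : ∀ᵐ x ∂(volume.restrict (unitCell d)), u x ^ 2 ≤ ∑ r, T r x := by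
    refine ae_restrict_of_ae ?_
    filter_upwards [ae_offgrid ε] with x hx
    obtain ⟨r, hr⟩ := exists_beta hd hε hn he hab hV q0 hq0 hL x hx
    refine le_trans ?_ (Finset.single_le_sum (fun r _ => hT0 r x) (Finset.mem_univ r))
    have hr' : V (x + w r) = β := hr
    simp only [T, hr']
    have h1 : u (x + w r) ^ 2 ≤ ε ^ 2 / c_β * (β * u (x + w r) ^ 2) := by
      have : 1 ≤ ε ^ 2 / c_β * β := by
        calc (1 : ℝ) = ε ^ 2 / c_β * (c_β / ε ^ 2) := by field_simp
          _ ≤ _ := by gcongr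
      rw [← mul_assoc]
      exact le_mul_of_one_le_left (sq_nonneg _) this
    have h2 : 2 * ε ^ 2 / c_β * (β * u (x + w r) ^ 2) =
      2 * (ε ^ 2 / c_β * (β * u (x + w r) ^ 2)) := by ring
    rw [h2]
    nlinarith [sq_nonneg (u (x + w r) + (u (x + w r) - u x))]
  have hTb : ∀ r, ∫ x in unitCell d, T r x ≤
      2 * ε ^ 2 / c_β * (∫ x in unitCell d, V x * u x ^ 2) +
        2 * (d * (ε * L) ^ 2) * ∫ x in unitCell d, gradSq u x := by
    intro r
    have e : ∫ x in unitCell d, T r x =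
        2 * ε ^ 2 / c_β * (∫ x in unitCell d, V (x + w r) * u (x + w r) ^ 2) +
        2 * ∫ x in unitCell d, (u (x + w r) - u x) ^ 2 := by
      simp only [T]
      rw [integral_add (i1 r) (i2 r), integral_const_mul, integral_const_mul]
    have hper : ZPeriodic fun x => V x * u x ^ 2 := fun x k => by
      simp only [hV.1 x k, hu x k]
    rw [e, aux_translate (fun x => V x * u x ^ 2) hper (w r)]
    have h1 := diff_le u hu hK (w r)
    have h2 : ∫ x in unitCell d, (fderiv ℝ u x (w r)) ^ 2 ≤
        ∫ x in unitCell d, d * (ε * L) ^ 2 * gradSq u x := by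
      refine integral_mono_of_nonneg (Filter.Eventually.of_forall fun x => sq_nonneg _)
        ((gradSq_int u hK).const_mul _) (Filter.Eventually.of_forall fun x => ?_)
      refine fderiv_sq_le u x (w r) fun i => ?_
      have : ((r i : ℕ) : ℝ) ≤ L := by
        have := (r i).2
        exact_mod_cast Nat.lt_succ_iff.1 this
      simp only [w]
      gcongr
    rw [integral_const_mul] at h2
    linarith
  calc ∫ x in unitCell d, u x ^ 2 ≤ ∫ x in unitCell d, ∑ r, T r x :=
        integral_mono_of_nonneg (Filter.Eventually.of_forall fun x => sq_nonneg _)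
          (integrable_finsetSum _ fun r _ => hTi r) hpt
    _ = ∑ r, ∫ x in unitCell d, T r x := integral_finsetSum _ fun r _ => hTi r
    _ ≤ ∑ r : Fin d → Fin (L + 1), _ := Finset.sum_le_sum fun r _ => hTb r
    _ = _ := by
      rw [Finset.sum_const, Finset.card_univ, nsmul_eq_mul]
      congr 1
      simp

lemma sum_energy {d : ℕ} {ε α β : ℝ} {V : (Fin d → ℝ) → ℝ} {n : ℕ} (hε : 0 < ε)
    (hn : 0 < n) (he : ε * n = 1) (hα : 0 ≤ α) (hαβ : α ≤ β) (hV : IsGridPotential ε α β V)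
    (u : (Fin d → ℝ) → ℝ) {K : NNReal} (hK : LipschitzWith K u) :
    ∑ z : Fin d → Fin n,
        energySq V (fun x => perHat ε (fun i => ε * ((z i : ℕ) : ℝ)) x * u x) ≤
      3 ^ d * (2 * (∫ x in unitCell d, gradSq u x) +
        2 * d ^ 3 / ε ^ 2 * (∫ x in unitCell d, u x ^ 2) +
        ∫ x in unitCell d, V x * u x ^ 2) := by
  have hcont := hK.continuous
  have hV0 : ∀ x, 0 ≤ V x := fun x => by
    rcases hV.2.1 x with h | h <;> rw [h]
    · exact hα
    · exact hα.trans hαβ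
  let G : (Fin d → ℝ) → ℝ := fun x =>
    2 * gradSq u x + 2 * d ^ 3 / ε ^ 2 * u x ^ 2 + V x * u x ^ 2
  have hG0 : ∀ x, 0 ≤ G x := fun x => by
    have := hV0 x
    have := gradSq_nonneg u x
    simp only [G]
    positivity
  have j1 : IntegrableOn (fun x => 2 * gradSq u x) (unitCell d) := (gradSq_int u hK).const_mul _
  have j2 : IntegrableOn (fun x => 2 * d ^ 3 / ε ^ 2 * u x ^ 2) (unitCell d) :=
    cont_int (by fun_prop)
  have j3 : IntegrableOn (fun x => V x * u x ^ 2) (unitCell d) := by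
    simpa using pot_int hε hV hcont 0
  have hGi : IntegrableOn G (unitCell d) := (j1.add j2).add j3
  have hGe : ∫ x in unitCell d, G x = 2 * (∫ x in unitCell d, gradSq u x) +
        2 * d ^ 3 / ε ^ 2 * (∫ x in unitCell d, u x ^ 2) +
        ∫ x in unitCell d, V x * u x ^ 2 := by
    rw [← integral_const_mul, ← integral_const_mul, ← integral_add j1 j2]
    exact integral_add (j1.add j2) j3
  let lam : (Fin d → Fin n) → (Fin d → ℝ) → ℝ := fun z => perHat ε fun i => ε * ((z i : ℕ) : ℝ)
  let S : (Fin d → Fin n) → Set (Fin d → ℝ) := fun z => {x | lam z x ≠ 0}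
  have hS : ∀ z, MeasurableSet (S z) := fun z =>
    (isOpen_ne_fun (perHat_lip hε _).continuous continuous_const).measurableSet
  have hgi : ∀ z, IntegrableOn ((S z).indicator G) (unitCell d) := fun z =>
    hGi.indicator (hS z)
  rw [← hGe]
  calc _ ≤ ∑ z : Fin d → Fin n, ∫ x in unitCell d, (S z).indicator G x := by
        refine Finset.sum_le_sum fun z _ => ?_
        refine integral_mono_of_nonneg (Filter.Eventually.of_forall fun x => ?_) (hgi z)
          (ae_restrict_of_ae ?_)
        · exact add_nonneg (gradSq_nonneg _ _) (mul_nonneg (hV0 x) (sq_nonneg _))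
        · filter_upwards [hK.ae_differentiableAt,
            (perHat_lip hε (fun i => ε * ((z i : ℕ) : ℝ))).ae_differentiableAt] with x h1 h2
          exact hat_pt hε _ x V u (hV0 x) h1 h2
    _ = ∫ x in unitCell d, ∑ z, (S z).indicator G x :=
        (integral_finsetSum _ fun z _ => hgi z).symm
    _ ≤ ∫ x in unitCell d, 3 ^ d * G x := by
        refine integral_mono (integrable_finsetSum _ fun z _ => hgi z) (hGi.const_mul _) fun x => ?_
        classical
        have e : ∑ z, (S z).indicator G x =
            (Finset.univ.filter fun z : Fin d → Fin n => lam z x ≠ 0).card * G x := by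
          simp only [Set.indicator_apply, S, Set.mem_ofPred_eq]
          rw [← Finset.sum_filter, Finset.sum_const, nsmul_eq_mul]
        have hcard := hat_count hε hn he x
        simp only
        rw [e]
        refine mul_le_mul_of_nonneg_right ?_ (hG0 x)
        exact_mod_cast (by convert hcard)
    _ = _ := by rw [integral_const_mul]

/-- Lemma 3.2 of the paper, the stable-decomposition constant `K₁`:
if the β-region is nonempty, a cut-off function with constant `Cη` exists and
`β ≥ c_β ε⁻²`, there is `C = C(d, Cη, c_β)` such that for the periodic `Q₁` partition of
unity `(λ_z)` on the grid vertices `εℤ^d / ℤ^d`, every periodic Lipschitz `u` satisfies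
`Σ_z |||λ_z u|||² ≤ C · 2^{d+1} (1 + (κ L^d)² L²) |||u|||²`. -/
theorem statement4 (d : ℕ) (hd : 1 ≤ d) (Cη c_β : ℝ) (hcβ : 0 < c_β) :
    ∃ C : ℝ, 0 < C ∧
      ∀ (ε α β : ℝ) (V : (Fin d → ℝ) → ℝ) (n L κ : ℕ),
        0 < ε → 0 < n → ε * n = 1 →
        0 ≤ α → α ≤ β →
        IsGridPotential ε α β V →
        (∃ q : Fin d → ℤ, ∀ x ∈ gridCell ε q, V x = β) →
        (∃ η : (Fin d → ℝ) → ℝ, IsCutoff ε Cη α β V η) →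
        c_β / ε ^ 2 ≤ β →
        IsValleyWidth ε α V L → IsOverlapNumber ε α V κ →
        ∀ u : (Fin d → ℝ) → ℝ, ZPeriodic u → (∃ K : NNReal, LipschitzWith K u) →
          ∑ z : Fin d → Fin n,
              energySq V (fun x => perHat ε (fun i => ε * ((z i : ℕ) : ℝ)) x * u x) ≤
            C * 2 ^ (d + 1) * (1 + ((κ : ℝ) * (L : ℝ) ^ d) ^ 2 * (L : ℝ) ^ 2) *
              energySq V u := by
  have hA : (0 : ℝ) ≤ 2 * d ^ 3 * 2 ^ d * (2 / c_β + 2 * d) := by positivity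
  refine ⟨3 ^ d * (2 + 2 * d ^ 3 * 2 ^ d * (2 / c_β + 2 * d)), by positivity, ?_⟩
  intro ε α β V n L κ hε hn he hα hαβ hV ⟨q0, hq0⟩ ⟨η, hη⟩ hβ hL hκ u hu ⟨K, hK⟩
  have hab : α ≠ β := by
    intro hab
    have h1 := hη.eq_one q0 (by rw [hab]; exact hq0) _ (center_mem hε q0)
    have h0 := hη.eq_zero q0 hq0 (fun i => ((q0 i : ℝ) + 1 / 2) * ε) (fun i => by
      constructor <;> nlinarith)
    rw [h1] at h0
    exact one_ne_zero h0
  have hκ1 : (1 : ℝ) ≤ κ := by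
    exact_mod_cast kappa_pos hd hε hn he hab hV q0 hq0 hκ
  have hL1 : (1 : ℝ) ≤ L := by
    have : 1 ≤ L := by
      rcases hL with h | h
      · obtain ⟨q, hq⟩ := h.1
        exact hq.1.1
      · exact h.2.ge
    exact_mod_cast this
  have hV0 : ∀ x, 0 ≤ V x := fun x => by
    rcases hV.2.1 x with h | h <;> rw [h]
    · exact hα
    · exact hα.trans hαβ
  have hs := sum_energy hε hn he hα hαβ hV u hK
  have hp := poincare hd hε hn he hab hα hαβ hcβ hβ hV q0 hq0 hL u hu hK
  have hE : energySq V u = (∫ x in unitCell d, gradSq u x) +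
      ∫ x in unitCell d, V x * u x ^ 2 := by
    have hi : IntegrableOn (fun x => V x * u x ^ 2) (unitCell d) := by
      simpa using pot_int hε hV hK.continuous 0
    exact integral_add (gradSq_int u hK) hi
  have hG0 : 0 ≤ ∫ x in unitCell d, gradSq u x :=
    integral_nonneg fun x => gradSq_nonneg u x
  have hP0 : 0 ≤ ∫ x in unitCell d, V x * u x ^ 2 :=
    integral_nonneg fun x => mul_nonneg (hV0 x) (sq_nonneg _)
  rw [hE]
  refine hs.trans ?_
  set G := ∫ x in unitCell d, gradSq u x
  set P := ∫ x in unitCell d, V x * u x ^ 2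
  set U := ∫ x in unitCell d, u x ^ 2
  set A : ℝ := 2 * d ^ 3 * 2 ^ d * (2 / c_β + 2 * d) with hAdef
  set X : ℝ := ((κ : ℝ) * (L : ℝ) ^ d) ^ 2 * (L : ℝ) ^ 2 with hX
  have hX0 : 0 ≤ X := by positivity
  have hXge : (L : ℝ) ^ d * (L : ℝ) ^ 2 ≤ X := by
    rw [hX]
    refine mul_le_mul_of_nonneg_right ?_ (by positivity)
    have hLd : (1 : ℝ) ≤ (L : ℝ) ^ d := one_le_pow₀ hL1
    have h1 : (L : ℝ) ^ d ≤ κ * (L : ℝ) ^ d := le_mul_of_one_le_left (by linarith) hκ1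
    have h2 : κ * (L : ℝ) ^ d ≤ (κ * (L : ℝ) ^ d) ^ 2 :=
      le_self_pow₀ (by linarith) two_ne_zero
    linarith
  have hU : 2 * d ^ 3 / ε ^ 2 * U ≤ A * X * (G + P) := by
    calc 2 * d ^ 3 / ε ^ 2 * U ≤ 2 * d ^ 3 / ε ^ 2 * (((L : ℝ) + 1) ^ d *
          (2 * ε ^ 2 / c_β * P + 2 * (d * (ε * L) ^ 2) * G)) := by gcongr
      _ = 2 * d ^ 3 * ((L : ℝ) + 1) ^ d * (2 / c_β * 1 * P + 2 * d * (L : ℝ) ^ 2 * G) := by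
        field_simp
      _ ≤ 2 * d ^ 3 * (2 * (L : ℝ)) ^ d *
          (2 / c_β * (L : ℝ) ^ 2 * (G + P) + 2 * d * (L : ℝ) ^ 2 * (G + P)) := by
        gcongr
        · linarith
        · exact one_le_pow₀ hL1
        · linarith
        · linarith
      _ = A * ((L : ℝ) ^ d * (L : ℝ) ^ 2) * (G + P) := by
        rw [hAdef, mul_pow]; ring
      _ ≤ A * X * (G + P) := by gcongr
  have hGP : 0 ≤ G + P := by linarith
  calc 3 ^ d * (2 * G + 2 * d ^ 3 / ε ^ 2 * U + P)
      ≤ 3 ^ d * (2 * (G + P) + A * X * (G + P)) := by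
        refine mul_le_mul_of_nonneg_left ?_ (by positivity)
        linarith
    _ ≤ 3 ^ d * ((2 + A) * (1 + X) * (G + P)) := by
        gcongr
        have : 0 ≤ (2 * X + A) * (G + P) := by positivity
        nlinarith
    _ = 3 ^ d * (2 + A) * 1 * (1 + X) * (G + P) := by ring
    _ ≤ 3 ^ d * (2 + A) * 2 ^ (d + 1) * (1 + X) * (G + P) := by
        gcongr
        exact one_le_pow₀ (by norm_num)

end
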